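/- Let G be a connected, simple graph with maximum degree at most 3 and nonnegative Ricci curvature, and let P = v_0 v_1 ⋯ v_l be a geodesic path and i an index with 0 ≤ i ≤ l − 3. (1) If deg(v_{i+1}) = 2 and v_{i+2} has a neighbor u ∉ {v_{i+1}, v_{i+3}}, then d(v_i, u) ≤ 2. (2) Symmetrically, if deg(v_{i+2}) = 2 and v_{i+1} has a neighbor u ∉ {v_i, v_{i+2}}, then d(u, v_{i+3}) ≤ 2. -/

import Mathlib

open SimpleGraph

variable {V : Type*}

/-- Combinatorial (unnormalized) graph Laplacian. -/
def lapl (G : SimpleGraph V) [G.LocallyFinite] (f : V → ℝ) (x : V) : ℝ :=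
  ∑ y ∈ G.neighborFinset x, (f y - f x)

/-- Lin-Lu-Yau-Ollivier Ricci curvature (limit-free definition):
`κ(u,v) = inf { Δf(u) − Δf(v) : f 1-Lipschitz w.r.t. graph distance, f v − f u = 1 }`. -/
noncomputable def ricci (G : SimpleGraph V) [G.LocallyFinite] (u v : V) : ℝ :=
  sInf { r : ℝ | ∃ f : V → ℝ,
    (∀ x y : V, |f x - f y| ≤ (G.dist x y : ℝ)) ∧ f v - f u = 1 ∧
    r = lapl G f u - lapl G f v }

/-- Nonnegative Ricci curvature on every edge. -/
def NonnegRicci (G : SimpleGraph V) [G.LocallyFinite] : Prop :=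
  ∀ u v : V, G.Adj u v → 0 ≤ ricci G u v
theorem abs_lapl_le_degree (G : SimpleGraph V) [G.LocallyFinite] {f : V → ℝ}
    (hf : ∀ x y : V, |f x - f y| ≤ (G.dist x y : ℝ)) (x : V) :
    |lapl G f x| ≤ G.degree x := by
  calc |lapl G f x| ≤ ∑ y ∈ G.neighborFinset x, |f y - f x| := Finset.abs_sum_le_sum_abs _ _
    _ ≤ ∑ _y ∈ G.neighborFinset x, (1 : ℝ) := Finset.sum_le_sum fun y hy => by
        have hxy : G.Adj y x := ((G.mem_neighborFinset x y).1 hy).symm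
        simpa [dist_eq_one_iff_adj.2 hxy] using hf y x
    _ = G.degree x := by simp

theorem ricci_le (G : SimpleGraph V) [G.LocallyFinite] {u v : V} {f : V → ℝ}
    (hf : ∀ x y : V, |f x - f y| ≤ (G.dist x y : ℝ)) (huv : f v - f u = 1) :
    ricci G u v ≤ lapl G f u - lapl G f v := by
  refine csInf_le ⟨-(G.degree u + G.degree v), ?_⟩ ⟨f, hf, huv, rfl⟩
  rintro r ⟨g, hg, -, rfl⟩
  linarith [(abs_le.1 (abs_lapl_le_degree G hg u)).1, (abs_le.1 (abs_lapl_le_degree G hg v)).2]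

theorem SimpleGraph.Connected.abs_dist_sub_dist_le {G : SimpleGraph V} (hconn : G.Connected)
    (a x y : V) : |(G.dist a x : ℝ) - G.dist a y| ≤ G.dist x y := by
  have hx : G.dist a x ≤ G.dist a y + G.dist y x := hconn.dist_triangle
  have hy : G.dist a y ≤ G.dist a x + G.dist x y := hconn.dist_triangle
  rw [dist_comm (u := y)] at hx
  rw [abs_le]
  constructor
  · have : (G.dist a y : ℝ) ≤ G.dist a x + G.dist x y := mod_cast hy
    linarith
  · have : (G.dist a x : ℝ) ≤ G.dist a y + G.dist x y := mod_cast hx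
    linarith

/-- Length of a subpath is an upper bound for the distance between its endpoints. -/
theorem SimpleGraph.Connected.dist_le_of_adj_succ {G : SimpleGraph V} (hconn : G.Connected)
    {l : ℕ} {v : ℕ → V} (hadj : ∀ k < l, G.Adj (v k) (v (k + 1))) (m n : ℕ) (h : m + n ≤ l) :
    G.dist (v m) (v (m + n)) ≤ n := by
  induction n with
  | zero => simp
  | succ n ih =>
    have htri : G.dist (v m) (v (m + (n + 1))) ≤
        G.dist (v m) (v (m + n)) + G.dist (v (m + n)) (v (m + n + 1)) := hconn.dist_triangle
    rw [dist_eq_one_iff_adj.2 (hadj (m + n) (by lia))] at htri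
    have := ih (by lia)
    lia

/-- If `a b c e` is a geodesic, `b` has degree 2 and `c` has degree at most 3, then any further
neighbor of `c` is within distance 2 of `a`: otherwise the distance function to `a` would
witness negative curvature of the edge `bc`. -/
theorem dist_le_two_of_ricci_nonneg (G : SimpleGraph V) [G.LocallyFinite]
    (hconn : G.Connected) {a b c e u : V} (hab : G.Adj a b) (hbc : G.Adj b c) (hce : G.Adj c e)
    (hae : G.dist a e = 3) (hb : G.degree b = 2) (hc : G.degree c ≤ 3)
    (hric : 0 ≤ ricci G b c) (hcu : G.Adj c u) (hub : u ≠ b) (hue : u ≠ e) :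
    G.dist a u ≤ 2 := by
  classical
  by_contra! hau
  have dab : G.dist a b = 1 := dist_eq_one_iff_adj.2 hab
  have dbc : G.dist b c = 1 := dist_eq_one_iff_adj.2 hbc
  have dce : G.dist c e = 1 := dist_eq_one_iff_adj.2 hce
  have hace : G.dist a e ≤ G.dist a c + G.dist c e := hconn.dist_triangle
  have habc : G.dist a c ≤ G.dist a b + G.dist b c := hconn.dist_triangle
  have dac : G.dist a c = 2 := by lia
  have hne_ac : a ≠ c := by rintro rfl; simp at dac
  have hne_be : b ≠ e := by rintro rfl; lia
  have hNb : G.neighborFinset b = {a, c} := by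
    refine (Finset.eq_of_subset_of_card_le ?_ ?_).symm
    · intro x hx
      rcases Finset.mem_insert.1 hx with rfl | hx
      · simpa using hab.symm
      · simpa [Finset.mem_singleton.1 hx] using hbc
    · rw [card_neighborFinset_eq_degree, hb, Finset.card_pair hne_ac]
  have hNc : G.neighborFinset c = {b, e, u} := by
    refine (Finset.eq_of_subset_of_card_le ?_ ?_).symm
    · intro x hx
      simp only [Finset.mem_insert, Finset.mem_singleton] at hx
      rcases hx with rfl | rfl | rfl
      · simpa using hbc.symm
      · simpa using hce
      · simpa using hcu
    · rw [card_neighborFinset_eq_degree, Finset.card_eq_three.2 ⟨b, e, u, hne_be, hub.symm,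
        hue.symm, rfl⟩]
      exact hc
  have hle := ricci_le G (u := b) (v := c) (f := fun x => (G.dist a x : ℝ))
    (hconn.abs_dist_sub_dist_le a) (by norm_num [dab, dac])
  have hlb : lapl G (fun x => (G.dist a x : ℝ)) b = 0 := by
    rw [lapl, hNb, Finset.sum_pair hne_ac]
    norm_num [dab, dac]
  have hlc : 1 ≤ lapl G (fun x => (G.dist a x : ℝ)) c := by
    have hau' : (3 : ℝ) ≤ G.dist a u := mod_cast hau
    rw [lapl, hNc, Finset.sum_insert (by simp [hne_be, hub.symm]), Finset.sum_pair hue.symm]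
    simp only [dab, dac, hae]
    push_cast
    linarith
  linarith

/-- Let `P = v 0, …, v l` be a geodesic path in a connected simple graph
with maximum degree at most 3 and nonnegative Ricci curvature, and let `0 ≤ i ≤ l − 3`.
(1) If `deg (v (i+1)) = 2` and `u` is a neighbor of `v (i+2)` other than `v (i+1)` and
`v (i+3)`, then `d(v i, u) ≤ 2`. (2) Symmetrically, if `deg (v (i+2)) = 2` and `u` is a
neighbor of `v (i+1)` other than `v i` and `v (i+2)`, then `d(u, v (i+3)) ≤ 2`. -/
theorem extra_neighbor_close (G : SimpleGraph V) [G.LocallyFinite]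
    (hconn : G.Connected) (hdeg : ∀ x : V, G.degree x ≤ 3) (hric : NonnegRicci G)
    (l : ℕ) (v : ℕ → V)
    (hadj : ∀ k < l, G.Adj (v k) (v (k + 1)))
    (hinj : ∀ k ≤ l, ∀ m ≤ l, v k = v m → k = m)
    (hgeo : G.dist (v 0) (v l) = l)
    (i : ℕ) (hi : i + 3 ≤ l) :
    ((G.degree (v (i + 1)) = 2 →
        ∀ u : V, G.Adj (v (i + 2)) u → u ≠ v (i + 1) → u ≠ v (i + 3) →
          G.dist (v i) u ≤ 2) ∧
      (G.degree (v (i + 2)) = 2 →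
        ∀ u : V, G.Adj (v (i + 1)) u → u ≠ v i → u ≠ v (i + 2) →
          G.dist u (v (i + 3)) ≤ 2)) := by
  have hsub : G.dist (v i) (v (i + 3)) = 3 := by
    obtain ⟨n, rfl⟩ := Nat.exists_eq_add_of_le hi
    have hstart := hconn.dist_le_of_adj_succ hadj 0 i (by lia)
    have hmid := hconn.dist_le_of_adj_succ hadj i 3 (by lia)
    have hend := hconn.dist_le_of_adj_succ hadj (i + 3) n le_rfl
    rw [Nat.zero_add] at hstart
    have htri : G.dist (v 0) (v (i + 3 + n)) ≤ G.dist (v 0) (v i) + G.dist (v i) (v (i + 3 + n)) :=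
      hconn.dist_triangle
    have htri' : G.dist (v i) (v (i + 3 + n)) ≤
        G.dist (v i) (v (i + 3)) + G.dist (v (i + 3)) (v (i + 3 + n)) := hconn.dist_triangle
    lia
  have h01 : G.Adj (v i) (v (i + 1)) := hadj i (by lia)
  have h12 : G.Adj (v (i + 1)) (v (i + 2)) := hadj (i + 1) (by lia)
  have h23 : G.Adj (v (i + 2)) (v (i + 3)) := hadj (i + 2) (by lia)
  refine ⟨fun hb u hu hu1 hu3 => ?_, fun hb u hu hu0 hu2 => ?_⟩
  · exact dist_le_two_of_ricci_nonneg G hconn h01 h12 h23 hsub hb (hdeg _) (hric _ _ h12)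
      hu hu1 hu3
  · rw [dist_comm]
    exact dist_le_two_of_ricci_nonneg G hconn h23.symm h12.symm h01.symm
      (by rw [dist_comm, hsub]) hb (hdeg _) (hric _ _ h12.symm) hu hu2 hu0
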